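/- Assume the group G of the walk is finite, and suppose that for every t in (0,1) the orbit-sum O(x,y) vanishes on the kernel curve: for every (x0,y0) in C^2 with K(x0,y0,t) = 0 at which the rational function O is defined, O(x0,y0) = 0. Then O(x,y) is the zero element of C(x,y). -/

import Mathlib

open scoped BigOperators

namespace QuadrantWalk

/-- Position of a walk after its first `k` steps. Steps are indexed by `Fin 3 × Fin 3`,
with `s` representing the step `((s.1 : ℤ) - 1, (s.2 : ℤ) - 1) ∈ {-1,0,1}²`.
The walk starts at the origin `(0,0)`. -/
def pos {n : ℕ} (w : Fin n → Fin 3 × Fin 3) (k : ℕ) : ℤ × ℤ :=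
  ∑ i ∈ Finset.univ.filter (fun i : Fin n => (i : ℕ) < k),
    (((w i).1 : ℤ) - 1, ((w i).2 : ℤ) - 1)

open scoped Classical in
/-- `q d i j n` is the total weight (with respect to the weights `d`) of quadrant walks
of length `n` from `(0,0)` to `(i,j)`: walks whose positions all stay in `ℕ²`. -/
noncomputable def q (d : Fin 3 × Fin 3 → ℝ) (i j n : ℕ) : ℝ :=
  ∑ w ∈ Finset.univ.filter (fun w : Fin n → Fin 3 × Fin 3 =>
      (∀ k ≤ n, 0 ≤ (pos w k).1 ∧ 0 ≤ (pos w k).2) ∧ pos w n = ((i : ℤ), (j : ℤ))),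
    ∏ s : Fin n, d (w s)

/-- `ℂ[x,y]`, where `x = X 0` and `y = X 1`. -/
abbrev R2 : Type := MvPolynomial (Fin 2) ℂ

/-- The generating function `Q(x,y,t) = ∑ q(i,j,n) xⁱ yʲ tⁿ`, as a formal power series in `t`
with coefficients in `ℂ[x,y]` (the coefficient of `tⁿ` is a polynomial of degree at most `n`
in each of `x` and `y`). -/
noncomputable def Q (d : Fin 3 × Fin 3 → ℝ) : PowerSeries R2 :=
  PowerSeries.mk fun n =>
    ∑ i ∈ Finset.range (n + 1), ∑ j ∈ Finset.range (n + 1),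
      MvPolynomial.C ((q d i j n : ℝ) : ℂ) * MvPolynomial.X 0 ^ i * MvPolynomial.X 1 ^ j

/-- Formal partial derivative `∂/∂x` of a power series in `t` with coefficients in `ℂ[x,y]`. -/
noncomputable def Dx (φ : PowerSeries R2) : PowerSeries R2 :=
  PowerSeries.mk fun n => MvPolynomial.pderiv (0 : Fin 2) (PowerSeries.coeff n φ)

/-- Formal partial derivative `∂/∂y`. -/
noncomputable def Dy (φ : PowerSeries R2) : PowerSeries R2 :=
  PowerSeries.mk fun n => MvPolynomial.pderiv (1 : Fin 2) (PowerSeries.coeff n φ)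

/-- Formal partial derivative `∂/∂t`. -/
noncomputable def Dt (φ : PowerSeries R2) : PowerSeries R2 :=
  PowerSeries.mk fun n => ((n : R2) + 1) * PowerSeries.coeff (n + 1) φ

/-- `φ` satisfies a non-trivial linear differential equation with respect to the
derivation `D`, with coefficients that are polynomials in `x`, `y` and `t`
(an element of `ℂ[x,y][t]` is viewed as a power series in `t` over `ℂ[x,y]`). -/
noncomputable def SatLinODE (D : PowerSeries R2 → PowerSeries R2) (φ : PowerSeries R2) : Prop :=
  ∃ (m : ℕ) (c : Fin (m + 1) → Polynomial R2), (∃ i, c i ≠ 0) ∧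
    ∑ i : Fin (m + 1), Polynomial.coeToPowerSeries.ringHom (c i) * D^[(i : ℕ)] φ = 0

/-- The field `ℂ(x,y)`. -/
abbrev F2 : Type := FractionRing R2

noncomputable def Xf : F2 := algebraMap R2 F2 (MvPolynomial.X 0)

noncomputable def Yf : F2 := algebraMap R2 F2 (MvPolynomial.X 1)

/-- `A b`, for `b : Fin 3` encoding `j = b - 1 ∈ {-1,0,1}`, is the Laurent polynomial
`A_j(x) = ∑_{i=-1}^{1} d_{i,j} xⁱ`, viewed in `ℂ(x,y)`.  So `A 0 = A_{-1}`, `A 2 = A_1`. -/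
noncomputable def A (d : Fin 3 × Fin 3 → ℝ) (b : Fin 3) : F2 :=
  ∑ a : Fin 3, algebraMap R2 F2 (MvPolynomial.C ((d (a, b) : ℝ) : ℂ)) * Xf ^ ((a : ℤ) - 1)

/-- `B a` is `B_i(y) = ∑_{j=-1}^{1} d_{i,j} yʲ` for `i = a - 1`; `B 0 = B_{-1}`, `B 2 = B_1`. -/
noncomputable def B (d : Fin 3 × Fin 3 → ℝ) (a : Fin 3) : F2 :=
  ∑ b : Fin 3, algebraMap R2 F2 (MvPolynomial.C ((d (a, b) : ℝ) : ℂ)) * Yf ^ ((b : ℤ) - 1)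

end QuadrantWalk

namespace QuadrantWalk

/-- The orbit-sum `O(x,y) = ∑_{j=0}^{n-1} (σʲ(xy) - (ι₁ σʲ)(xy)) ∈ ℂ(x,y)`, where
`σ = ι₂ ∘ ι₁` and `n` is the order of `σ`. -/
noncomputable def orbitSum (ι₁ ι₂ : RingAut F2) : F2 :=
  ∑ j ∈ Finset.range (orderOf (ι₂ * ι₁)),
    (((ι₂ * ι₁) ^ j) (Xf * Yf) - (ι₁ * (ι₂ * ι₁) ^ j) (Xf * Yf))

/-- The kernel `K(x,y,t) = xy(1 - t S(x,y))` evaluated at a point `(x₀,y₀,t) ∈ ℂ × ℂ × ℝ`,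
written in its polynomial form `x₀y₀ - t ∑_{a,b=0}^{2} d_{a-1,b-1} x₀ᵃ y₀ᵇ`. -/
noncomputable def Kval (d : Fin 3 × Fin 3 → ℝ) (x0 y0 : ℂ) (t : ℝ) : ℂ :=
  x0 * y0 - (t : ℂ) * ∑ s : Fin 3 × Fin 3, ((d s : ℝ) : ℂ) * x0 ^ (s.1 : ℕ) * y0 ^ (s.2 : ℕ)

/-- Assume the group of the walk is finite, and that for every
`t ∈ (0,1)` the orbit-sum `O(x,y)` vanishes at each point `(x₀,y₀)` of the kernel curve
`K(x₀,y₀,t) = 0` at which it is defined (i.e. for every representation `O = p/q` with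
`q(x₀,y₀) ≠ 0` one has `p(x₀,y₀) = 0`).  Then `O(x,y) = 0` in `ℂ(x,y)`. -/
theorem statement5
    (d : Fin 3 × Fin 3 → ℝ) (hd : ∀ s, 0 ≤ d s) (hsum : ∑ s : Fin 3 × Fin 3, d s = 1)
    (hA1 : A d 2 ≠ 0) (hAm1 : A d 0 ≠ 0) (hB1 : B d 2 ≠ 0) (hBm1 : B d 0 ≠ 0)
    (ι₁ ι₂ : RingAut F2)
    (h1x : ι₁ Xf = Xf) (h1y : ι₁ Yf = A d 0 / (A d 2 * Yf))
    (h2y : ι₂ Yf = Yf) (h2x : ι₂ Xf = B d 0 / (B d 2 * Xf))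
    (hfin : Finite (Subgroup.closure {ι₁, ι₂} : Subgroup (RingAut F2)))
    (hvanish : ∀ t ∈ Set.Ioo (0 : ℝ) 1, ∀ x0 y0 : ℂ, Kval d x0 y0 t = 0 →
      ∀ p q : R2, q ≠ 0 →
        orbitSum ι₁ ι₂ * algebraMap R2 F2 q = algebraMap R2 F2 p →
        MvPolynomial.eval (fun i : Fin 2 => if i = 0 then x0 else y0) q ≠ 0 →
        MvPolynomial.eval (fun i : Fin 2 => if i = 0 then x0 else y0) p = 0) :
    orbitSum ι₁ ι₂ = 0 := by
  classical
  obtain ⟨a, ha⟩ : ∃ a : Fin 3, 0 < d (a, 2) := by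
    by_contra! h
    apply hA1
    have h0 : ∀ a, d (a, 2) = 0 := fun a => le_antisymm (h a) (hd _)
    simp [A, h0]
  obtain ⟨⟨p, q, hq⟩, hpq⟩ := IsLocalization.surj (nonZeroDivisors R2) (orbitSum ι₁ ι₂)
  simp only at hpq
  have hq0 : q ≠ 0 := nonZeroDivisors.ne_zero hq
  have hprod : p * q = 0 := by
    let T : Fin 2 → Set ℂ := fun i =>
      if i = 0 then (fun r : ℝ => (r : ℂ)) '' Set.Ioo 1 2
      else (fun r : ℝ => (r : ℂ)) '' Set.Ioi (2 / d (a, 2))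
    apply MvPolynomial.funext_set T
    · intro i
      by_cases hi : i = 0
      · simp only [T, hi, if_true]
        exact (Set.Ioo_infinite (by norm_num)).image Complex.ofReal_injective.injOn
      · simp only [T, hi, if_false]
        exact (Set.Ioi_infinite _).image Complex.ofReal_injective.injOn
    · intro v hv
      obtain ⟨x, ⟨hx1, hx2⟩, hx⟩ : v 0 ∈ (fun r : ℝ => (r : ℂ)) '' Set.Ioo 1 2 := by
        simpa [T] using hv 0 (Set.mem_univ _)
      obtain ⟨y, hy1, hy⟩ : v 1 ∈ (fun r : ℝ => (r : ℂ)) '' Set.Ioi (2 / d (a, 2)) := by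
        simpa [T] using hv 1 (Set.mem_univ _)
      have hvv : v = fun i : Fin 2 => if i = 0 then (x : ℂ) else (y : ℂ) := by
        funext i
        fin_cases i
        · simpa using hx.symm
        · simpa using hy.symm
      have hy2 : 2 / d (a, 2) < y := hy1
      have hy0 : 0 < y := lt_trans (by positivity) hy2
      have hx0 : 0 < x := by linarith
      have hdy : 2 < d (a, 2) * y := by
        rw [div_lt_iff₀ ha] at hy2
        linarith
      set N : ℝ := ∑ s : Fin 3 × Fin 3, d s * x ^ (s.1 : ℕ) * y ^ (s.2 : ℕ) with hN
      have hN1 : d (a, 2) * x ^ (a : ℕ) * y ^ 2 ≤ N := by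
        have := Finset.single_le_sum
          (f := fun s : Fin 3 × Fin 3 => d s * x ^ (s.1 : ℕ) * y ^ (s.2 : ℕ))
          (fun s _ => mul_nonneg (mul_nonneg (hd s) (by positivity)) (by positivity))
          (Finset.mem_univ (a, (2 : Fin 3)))
        simpa using this
      have hN2 : x * y < N := by
        have h1 : 1 ≤ x ^ (a : ℕ) := one_le_pow₀ hx1.le
        have h2 : d (a, 2) * y ^ 2 ≤ d (a, 2) * x ^ (a : ℕ) * y ^ 2 := by
          have : d (a, 2) * y ^ 2 * 1 ≤ d (a, 2) * y ^ 2 * x ^ (a : ℕ) :=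
            mul_le_mul_of_nonneg_left h1 (by positivity)
          linarith
        have h3 : x * y < 2 * y := mul_lt_mul_of_pos_right hx2 hy0
        have h4 : 2 * y < d (a, 2) * y * y := mul_lt_mul_of_pos_right hdy hy0
        nlinarith
      have hxy : 0 < x * y := by positivity
      have hN0 : 0 < N := hxy.trans hN2
      have hK : Kval d (x : ℂ) (y : ℂ) (x * y / N) = 0 := by
        have h : (∑ s : Fin 3 × Fin 3, ((d s : ℝ) : ℂ) * (x : ℂ) ^ (s.1 : ℕ) * (y : ℂ) ^ (s.2 : ℕ))
            = ((N : ℝ) : ℂ) := by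
          rw [hN]; push_cast; rfl
        unfold Kval
        rw [h]
        have : x * y - x * y / N * N = 0 := by field_simp; ring
        exact_mod_cast this
      have key := hvanish (x * y / N) ⟨by positivity, (div_lt_one hN0).2 hN2⟩ x y hK p q hq0 hpq
      rw [← hvv] at key
      rw [map_mul, map_zero]
      by_cases h : MvPolynomial.eval v q = 0
      · rw [h, mul_zero]
      · rw [key h, zero_mul]
  have hp : p = 0 := (mul_eq_zero.1 hprod).resolve_right hq0
  rw [hp, map_zero] at hpq
  refine (mul_eq_zero.1 hpq).resolve_right ?_
  exact fun h => hq0 ((IsFractionRing.injective R2 F2) (by rw [h, map_zero]))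

end QuadrantWalk
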